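/- Let x = Σ_{n=1}^∞ x_n e_n be a nonzero element of X = (ℓ₁, ‖·‖_X) and let F_x = Σ_{n=1}^∞ a_n e*_n (with a ∈ ℓ_∞, ‖a‖_{X*} = 1) be a norming functional for x, i.e. F_x(y) = Σ_n a_n y_n satisfies |F_x(y)| ≤ ‖y‖_X for all y ∈ X and F_x(x) = ‖x‖_X. Then for every m ∈ ℕ with ν_m(a) > 0, the functional F^m_x(y) = (Σ_{n=1}^m a_n y_n)/ν_m(a) is a norming functional for the truncation x^m = Σ_{n=1}^m x_n e_n in the space X^m = (ℝ^m, ϑ_m), i.e. F^m_x(x^m) = ϑ_m(x) and |F^m_x(y)| ≤ ϑ_m(y) for all y ∈ ℝ^m. -/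

import Mathlib

/-!
Write `S_n = ∑_{k<n} a_k x_k`. Two-term Hölder, applied at each step of the recursions, gives
`ν_n ϑ_n + |a_n| |x_n| ≤ ν_{n+1} ϑ_{n+1}` (`vth_mul_step`). Hence the deficit
`D_n = ν_n(a) ϑ_n(x) - S_n` is non-decreasing in `n` (`deficit_mono`) and starts at `D_0 = 0`. The
same step, summed over `k < m`, gives `|∑_{k<m} a_k y_k| ≤ ν_m(a) ϑ_m(y)` for every sequence `y`
(`abs_sum_le_vth_mul`).

For the norming pair, `ν_n(a) → 1`, `ϑ_n(x) → ‖x‖_X` and `S_n → F_x(x) = ‖x‖_X`, so `D_n → 0`.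
A non-decreasing sequence that starts at `0` and tends to `0` vanishes identically, so
`S_m = ν_m(a) ϑ_m(x)` for every `m`.
-/

open Filter Topology

/-- The recursively defined functionals `ϑ_n` (0-based indexing: the exponent
`p k` here is the paper's `p_{k+1}`, and the coordinate `x k` is the paper's
`x_{k+1}`): `ϑ_0(x) = 0` and
`ϑ_{n+1}(x) = (ϑ_n(x)^{p n} + |x n|^{p n})^{1/(p n)}`; `ϑ_n` depends only on the
first `n` coordinates of `x`. -/
noncomputable def vth (p : ℕ → ℝ) : ℕ → (ℕ → ℝ) → ℝ
  | 0, _ => 0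
  | n + 1, x => (vth p n x ^ p n + |x n| ^ p n) ^ (1 / p n)

/-- The limit norm `‖x‖_X = lim_n ϑ_n(x)` (the sequence `ϑ_n(x)` is non-decreasing,
so the limit equals the supremum). -/
noncomputable def XNf (p : ℕ → ℝ) (x : ℕ → ℝ) : ℝ := ⨆ n, vth p n x

lemma vth_nonneg (p : ℕ → ℝ) (x : ℕ → ℝ) : ∀ n, 0 ≤ vth p n x
  | 0 => le_rfl
  | n + 1 => by
    have := vth_nonneg p x n
    simp only [vth]
    positivity

lemma vth_mono {p : ℕ → ℝ} (hp : ∀ n, 1 < p n) (x : ℕ → ℝ) : Monotone fun n => vth p n x := by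
  refine monotone_nat_of_le_succ fun n => ?_
  have h0 := vth_nonneg p x n
  have hpos : 0 < p n := by linarith [hp n]
  calc vth p n x = (vth p n x ^ p n) ^ (1 / p n) := by
        rw [← Real.rpow_mul h0, mul_one_div_cancel hpos.ne', Real.rpow_one]
    _ ≤ vth p (n + 1) x := by
        simp only [vth]
        exact Real.rpow_le_rpow (by positivity) (le_add_of_nonneg_right (by positivity))
          (by positivity)

/-- The triangle inequality along the recursion: each `ϑ_n` is dominated by the `ℓ₁` norm. -/
lemma vth_le_sum_abs {p : ℕ → ℝ} (hp : ∀ n, 1 < p n) (x : ℕ → ℝ) (n : ℕ) :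
    vth p n x ≤ ∑ k ∈ Finset.range n, |x k| := by
  induction n with
  | zero => simp [vth]
  | succ n ih =>
    rw [Finset.sum_range_succ]
    refine le_trans ?_ (add_le_add_left ih _)
    exact Real.rpow_add_rpow_le_add (vth_nonneg p x n) (abs_nonneg _) (hp n).le

/-- Two-term Hölder inequality at one step of the recursions. -/
lemma vth_mul_step {p q : ℕ → ℝ} (hpq : ∀ n, (p n).HolderConjugate (q n)) (a x : ℕ → ℝ) (n : ℕ) :
    vth q n a * vth p n x + |a n| * |x n| ≤ vth q (n + 1) a * vth p (n + 1) x := by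
  have h := Real.inner_le_Lp_mul_Lq_of_nonneg (Finset.univ : Finset (Fin 2))
    (f := ![vth q n a, |a n|]) (g := ![vth p n x, |x n|]) (hpq n).symm
    (by simp [Fin.forall_fin_two, vth_nonneg]) (by simp [Fin.forall_fin_two, vth_nonneg])
  simpa [Fin.sum_univ_two, vth] using h

/-- The finite-dimensional duality bound `|∑_{k<n} a_k y_k| ≤ ν_n(a) ϑ_n(y)`. -/
lemma abs_sum_le_vth_mul {p q : ℕ → ℝ} (hpq : ∀ n, (p n).HolderConjugate (q n)) (a y : ℕ → ℝ)
    (n : ℕ) : |∑ k ∈ Finset.range n, a k * y k| ≤ vth q n a * vth p n y := by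
  induction n with
  | zero => simp [vth]
  | succ n ih =>
    rw [Finset.sum_range_succ]
    have h1 := abs_add_le (∑ k ∈ Finset.range n, a k * y k) (a n * y n)
    have h2 := vth_mul_step hpq a y n
    rw [abs_mul] at h1
    linarith

/-- The Hölder deficit of the partial pairings is non-decreasing. -/
lemma deficit_mono {p q : ℕ → ℝ} (hpq : ∀ n, (p n).HolderConjugate (q n)) (a x : ℕ → ℝ) :
    Monotone fun n => vth q n a * vth p n x - ∑ k ∈ Finset.range n, a k * x k := by
  refine monotone_nat_of_le_succ fun n => ?_
  rw [Finset.sum_range_succ]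
  have h1 := le_abs_self (a n * x n)
  have h2 := vth_mul_step hpq a x n
  rw [abs_mul] at h1
  linarith

/-- **Lemma 5.** Let `x ∈ X = (ℓ₁, ‖·‖_X)` be nonzero and let
`F_x = Σ a_n e*_n` (with `‖a‖_{X*} = ⨆ n, ν_n(a) = 1`) be a norming functional for `x`:
`|F_x(y)| ≤ ‖y‖_X` for all `y` and `F_x(x) = ‖x‖_X`.  Then for every `m` with
`ν_m(a) > 0`, the functional `F^m_x(y) = (Σ_{n<m} a_n y_n)/ν_m(a)` is a norming
functional for the truncation `x^m` in `(ℝ^m, ϑ_m)`: `F^m_x(x^m) = ϑ_m(x)` and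
`|F^m_x(y)| ≤ ϑ_m(y)` for all `y`. -/
theorem norming_functional_initial_segment
    (p : ℕ → ℝ) (hp : ∀ n, 1 < p n) (hpa : Antitone p)
    (hsum : Summable (fun n => 1 - 1 / p n))
    (q : ℕ → ℝ) (hq : ∀ n, q n = p n / (p n - 1))
    (x : lp (fun _ : ℕ => ℝ) 1) (hx : x ≠ 0)
    (a : lp (fun _ : ℕ => ℝ) ⊤)
    (ha1 : (⨆ n, vth q n ↑a) = 1)
    (hbound : ∀ y : lp (fun _ : ℕ => ℝ) 1,
      |∑' n, (a : ℕ → ℝ) n * (y : ℕ → ℝ) n| ≤ XNf p ↑y)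
    (hattain : ∑' n, (a : ℕ → ℝ) n * (x : ℕ → ℝ) n = XNf p ↑x)
    (m : ℕ) (hm : 0 < vth q m ↑a) :
    (∑ n ∈ Finset.range m, (a : ℕ → ℝ) n * (x : ℕ → ℝ) n) / vth q m ↑a = vth p m ↑x ∧
    ∀ y : ℕ → ℝ, |(∑ n ∈ Finset.range m, (a : ℕ → ℝ) n * y n) / vth q m ↑a| ≤ vth p m y := by
  have hpq : ∀ n, (p n).HolderConjugate (q n) := fun n => by
    rw [hq n]
    exact Real.HolderConjugate.conjExponent (hp n)
  have hxs : Summable fun n => |(x : ℕ → ℝ) n| := by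
    simpa using (lp.memℓp x).summable (by norm_num)
  have hax : Summable fun n => (a : ℕ → ℝ) n * (x : ℕ → ℝ) n := by
    refine Summable.of_norm_bounded (hxs.mul_left ‖a‖) fun n => ?_
    rw [norm_mul]
    exact mul_le_mul_of_nonneg_right (lp.norm_apply_le_norm (by simp) a n) (norm_nonneg _)
  have htν : Tendsto (fun n => vth q n ↑a) atTop (𝓝 1) := by
    -- An unbounded supremum would take the junk value `0`, contradicting `ha1`.
    have hbdd : BddAbove (Set.range fun n => vth q n ↑a) := by
      by_contra h
      rw [Real.iSup_of_not_bddAbove h] at ha1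
      exact zero_ne_one ha1
    rw [← ha1]
    exact tendsto_atTop_ciSup (vth_mono (fun n => (hpq n).symm.lt) _) hbdd
  have htϑ : Tendsto (fun n => vth p n ↑x) atTop (𝓝 (XNf p ↑x)) := by
    refine tendsto_atTop_ciSup (vth_mono hp _) ⟨∑' k, |(x : ℕ → ℝ) k|, ?_⟩
    rintro _ ⟨n, rfl⟩
    exact (vth_le_sum_abs hp _ n).trans (hxs.sum_le_tsum _ fun _ _ => abs_nonneg _)
  have hmono := deficit_mono hpq (a : ℕ → ℝ) (x : ℕ → ℝ)
  have htD := (htν.mul htϑ).sub hax.hasSum.tendsto_sum_nat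
  rw [hattain, one_mul, sub_self] at htD
  have hle := hmono.ge_of_tendsto htD m
  have hge := hmono (Nat.zero_le m)
  simp only [vth, Finset.range_zero, Finset.sum_empty, mul_zero, sub_zero] at hge hle
  refine ⟨?_, fun y => ?_⟩
  · rw [div_eq_iff hm.ne']
    linarith
  · rw [abs_div, abs_of_pos hm, div_le_iff₀ hm, mul_comm]
    exact abs_sum_le_vth_mul hpq _ y m
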